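/- Let X be a finite set of nonzero integers and let b ∈ Sg(X). If |X| > 1 − log(σ_{|X|}) + log(‖X‖_∞), where σ_n = (2/π)·∫_0^∞ (sin x / x)^n dx, then there exists a proper subset Y ⊊ X such that b ∈ Sg(Y). -/

import Mathlib

/-!
Write `n = |X|` and `M = ‖X‖_∞`. If two different subsets `S`, `T` of `X` have the same sum, with
`S` not contained in `T`, then subtracting the indicator of `S` from a coefficient vector, adding
that of `T`, and repeating this as long as the coefficients stay nonnegative makes a coefficient
vanish without changing the value `b` (`exists_proper_subset_of_sum_eq`). So it suffices to
show that distinct subset sums force `2 ^ (n - 1) σₙ ≤ M`, since this contradicts the assumed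
inequality when `n ≥ 2`.

Let `h` be the density of the random variable `∑ (a / M) Uₐ`, summed over `a ∈ X`, with `Uₐ`
independent and uniform on `[-1/2, 1/2]`. The term of an element `m = ± M` of `X` has the density
`box` of a uniform variable, and `h` is obtained from `box` by averaging over windows of width
`|a| / M ≤ 1` for the other elements `a`. The central value `h 0` is bounded on both sides.

* Lower bound. Averaging preserves symmetric unimodal functions, the averages commute, and the
  central value of an average of a symmetric unimodal function decreases with the width of the
  window. Hence `h 0` is at least the central value obtained when all widths are `1`
  (`iterate_avg_le_avgList`), which is `σₙ` by Fourier inversion (`sincIntegral_eq`).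
* Upper bound. Twice a uniform variable is a uniform variable plus an independent random sign
  divided by two, so `2 ^ (n - 1) h (x / 2)` is the sum of the translates
  `h (x - s / (2 M) + s_T / M)` over the subsets `T` of `X`, where `s` and `s_T` are the sums of `X`
  and `T` (`avgList_refine`). When the integers `s_T` are distinct, the corresponding translates of
  `box` sum to at most `M`, and averaging keeps the bound `M` (`sum_avgList_box_le`). At `x = 0` this gives `2 ^ (n - 1) h 0 ≤ M`.

For `n ≤ 1` the logarithm of `σₙ` vanishes, also for the values that the Bochner integral takes, and
the hypothesis is contradictory.
-/

open MeasureTheory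

/-- The set of all values of nonnegative integer combinations of the elements
of a finite set `X` of integers. -/
def SgZ (X : Finset ℤ) : Set ℤ :=
  { b | ∃ lam : ℤ → ℕ, ∑ i ∈ X, (lam i : ℤ) * i = b }

/-- The sinc integral `σ_n = (2/π) ∫_0^∞ (sin x / x)^n dx`. -/
noncomputable def sincIntegral (n : ℕ) : ℝ :=
  (2 / Real.pi) * ∫ x in Set.Ioi (0 : ℝ), (Real.sin x / x) ^ n

/-! ### Symmetric unimodal functions and averaging -/

/-- A symmetric unimodal nonnegative function on the line: `f` is nonnegative and
`f x` decreases with `|x|`. -/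
structure SymmUnimodal (f : ℝ → ℝ) : Prop where
  nonneg : ∀ x, 0 ≤ f x
  anti : ∀ x y, |x| ≤ |y| → f y ≤ f x

namespace SymmUnimodal

variable {f : ℝ → ℝ}

lemma even (hf : SymmUnimodal f) (x : ℝ) : f (-x) = f x :=
  le_antisymm (hf.anti _ _ (by simp)) (hf.anti _ _ (by simp))

lemma abs_le (hf : SymmUnimodal f) (x : ℝ) : |f x| ≤ f 0 := by
  rw [abs_of_nonneg (hf.nonneg x)]
  exact hf.anti _ _ (by simp)

lemma measurable (hf : SymmUnimodal f) : Measurable f := by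
  have hg : Antitone fun t : ℝ => f (max t 0) := by
    intro s t hst
    apply hf.anti
    rw [abs_of_nonneg (le_max_right _ _), abs_of_nonneg (le_max_right _ _)]
    exact max_le_max_right 0 hst
  -- `f` is an antitone function of `|x|`.
  have h : f = (fun t : ℝ => f (max t 0)) ∘ fun x => |x| := by
    funext x
    refine le_antisymm (hf.anti _ _ ?_) (hf.anti _ _ ?_) <;> simp
  rw [h]
  exact hg.measurable.comp measurable_norm

lemma intervalIntegrable (hf : SymmUnimodal f) {g : ℝ → ℝ} (hg : Measurable g) (a b : ℝ) :
    IntervalIntegrable (fun u => f (g u)) volume a b := by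
  refine (intervalIntegrable_const (c := f 0)).mono_fun
    (hf.measurable.comp hg).aestronglyMeasurable ?_
  refine Filter.Eventually.of_forall fun u => ?_
  change |f (g u)| ≤ |f 0|
  rw [abs_of_nonneg (hf.nonneg 0)]
  exact hf.abs_le _

end SymmUnimodal

/-- The average of `f` over the interval of length `|c|` centred at `x`, that is, the density at
`x` of `Z + c U` when `Z` has density `f` and `U` is uniform on `[-1/2, 1/2]`. -/
noncomputable def avg (c : ℝ) (f : ℝ → ℝ) (x : ℝ) : ℝ :=
  ∫ u in (-1/2 : ℝ)..(1/2), f (x + c * u)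

lemma avg_neg_left (c : ℝ) (f : ℝ → ℝ) : avg (-c) f = avg c f := by
  funext x
  have h := intervalIntegral.integral_comp_neg (a := -1/2) (b := 1/2) fun u => f (x + c * u)
  simp only [avg]
  rw [show (-1/2 : ℝ) = -(1/2) by norm_num] at *
  rw [neg_neg] at h
  rw [← h]
  simp

lemma avg_eq_div {c : ℝ} (hc : c ≠ 0) (f : ℝ → ℝ) (x : ℝ) :
    avg c f x = c⁻¹ * ∫ u in (x - c / 2)..(x + c / 2), f u := by
  rw [avg, intervalIntegral.integral_comp_add_mul _ hc, smul_eq_mul]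
  congr 2 <;> ring

lemma avg_even {f : ℝ → ℝ} (hf : SymmUnimodal f) (c x : ℝ) : avg c f (-x) = avg c f x := by
  conv_lhs => rw [← avg_neg_left]
  simp only [avg]
  congr 1; funext u
  rw [← hf.even]; congr 1; ring

lemma avg_anti_aux {f : ℝ → ℝ} (hf : SymmUnimodal f) {c x y : ℝ} (hc : 0 < c) (hx : 0 ≤ x)
    (hxy : x ≤ y) : avg c f y ≤ avg c f x := by
  have hi : ∀ a b, IntervalIntegrable f volume a b := fun a b =>
    hf.intervalIntegrable measurable_id a b
  rw [avg_eq_div hc.ne', avg_eq_div hc.ne']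
  refine mul_le_mul_of_nonneg_left ?_ (by positivity)
  have h1 := intervalIntegral.integral_add_adjacent_intervals (hi (x - c/2) (y - c/2))
    (hi (y - c/2) (y + c/2))
  have h2 := intervalIntegral.integral_add_adjacent_intervals (hi (x - c/2) (x + c/2))
    (hi (x + c/2) (y + c/2))
  -- Moving the centre of the window from `x` to `y` gains the interval `[x + c/2, y + c/2]` and
  -- loses `[x - c/2, y - c/2]`, which has the same length and lies closer to the origin.
  have h3 : ∫ u in (x + c/2)..(y + c/2), f u ≤ ∫ u in (x - c/2)..(y - c/2), f u := by
    rw [← intervalIntegral.integral_comp_add_right, ← intervalIntegral.integral_comp_sub_right]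
    refine intervalIntegral.integral_mono_on hxy
      (hf.intervalIntegrable (by fun_prop) _ _) (hf.intervalIntegrable (by fun_prop) _ _) ?_
    intro t ht
    apply hf.anti
    have h0 : 0 ≤ t := hx.trans ht.1
    rw [abs_of_nonneg (by positivity : 0 ≤ t + c/2)]
    exact abs_le.2 ⟨by linarith, by linarith⟩
  linarith

/-- Averaging over a centred window preserves symmetric unimodality. -/
lemma SymmUnimodal.avg {f : ℝ → ℝ} (hf : SymmUnimodal f) (c : ℝ) : SymmUnimodal (avg c f) := by
  wlog hc : 0 ≤ c generalizing c
  · rw [← avg_neg_left]; exact this (-c) (by linarith)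
  refine ⟨fun x => intervalIntegral.integral_nonneg (by norm_num) fun u _ => hf.nonneg _, ?_⟩
  rcases hc.eq_or_lt with rfl | hc
  · intro x y hxy
    have : ∀ z, _root_.avg 0 f z = f z := by intro z; norm_num [_root_.avg]
    rw [this, this]; exact hf.anti x y hxy
  intro x y hxy
  have habs : ∀ z, _root_.avg c f |z| = _root_.avg c f z := by
    intro z
    rcases abs_choice z with h | h <;> rw [h]
    exact avg_even hf c z
  rw [← habs x, ← habs y]
  exact avg_anti_aux hf hc (abs_nonneg x) hxy

/-- Widening the averaging window lowers the central value. -/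
lemma avg_one_zero_le {f : ℝ → ℝ} (hf : SymmUnimodal f) {c : ℝ} (hc : |c| ≤ 1) :
    avg 1 f 0 ≤ avg c f 0 := by
  refine intervalIntegral.integral_mono_on (by norm_num)
    (hf.intervalIntegrable (by fun_prop) _ _) (hf.intervalIntegrable (by fun_prop) _ _) ?_
  intro u _
  apply hf.anti
  rw [zero_add, zero_add, abs_mul, one_mul]
  exact mul_le_of_le_one_left (abs_nonneg u) hc

lemma avg_comm {f : ℝ → ℝ} (hf : SymmUnimodal f) (c d : ℝ) :
    avg c (avg d f) = avg d (avg c f) := by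
  funext x
  simp only [avg]
  have : IsFiniteMeasure (volume.restrict (Set.uIoc (-1/2 : ℝ) (1/2))) :=
    ⟨by simp [Set.uIoc]⟩
  have h : Integrable (Function.uncurry fun u v : ℝ => f (x + c * u + d * v))
      ((volume.restrict (Set.uIoc (-1/2 : ℝ) (1/2))).prod
        (volume.restrict (Set.Ioc (-1/2 : ℝ) (1/2)))) := by
    refine Integrable.of_bound (C := f 0) ?_ (Filter.Eventually.of_forall fun p => hf.abs_le _)
    refine (hf.measurable.comp ?_).aestronglyMeasurable
    fun_prop
  have h2 := intervalIntegral_integral_swap h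
  simp only [intervalIntegral.integral_of_le (show (-1/2 : ℝ) ≤ 1/2 by norm_num)] at h2 ⊢
  rw [h2]
  simp only [add_assoc, add_comm, add_left_comm]

lemma SymmUnimodal.iterate_avg {f : ℝ → ℝ} (hf : SymmUnimodal f) (n : ℕ) :
    SymmUnimodal ((_root_.avg 1)^[n] f) := by
  induction n with
  | zero => exact hf
  | succ n ih => rw [Function.iterate_succ_apply']; exact ih.avg 1

/-- A positive value at `1/2` survives averaging, so all iterated averages stay positive there. -/
lemma avg_one_half_pos {f : ℝ → ℝ} (hf : SymmUnimodal f) (h : 0 < f (1/2)) :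
    0 < avg 1 f (1/2) := by
  have hi : ∀ a b, IntervalIntegrable (fun u => f (1/2 + 1 * u)) volume a b := fun a b =>
    hf.intervalIntegrable (by fun_prop) a b
  have h1 := intervalIntegral.integral_add_adjacent_intervals (hi (-1/2) 0) (hi 0 (1/2))
  have h2 : 0 ≤ ∫ u in (0:ℝ)..(1/2), f (1/2 + 1 * u) :=
    intervalIntegral.integral_nonneg (by norm_num) fun u _ => hf.nonneg _
  have h3 : ∫ u in (-1/2 : ℝ)..0, f (1/2) ≤ ∫ u in (-1/2 : ℝ)..0, f (1/2 + 1 * u) := by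
    refine intervalIntegral.integral_mono_on (by norm_num) (by simp) (hi _ _) ?_
    intro u hu
    apply hf.anti
    rw [abs_of_nonneg (by linarith [hu.1] : (0:ℝ) ≤ 1/2 + 1 * u), abs_of_nonneg (by norm_num)]
    linarith [hu.2]
  rw [intervalIntegral.integral_const, smul_eq_mul] at h3
  rw [avg, ← h1]
  linarith

lemma iterate_avg_zero_pos {f : ℝ → ℝ} (hf : SymmUnimodal f) (h : 0 < f (1/2)) (n : ℕ) :
    0 < (avg 1)^[n] f 0 := by
  have : 0 < (avg 1)^[n] f (1/2) := by
    induction n with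
    | zero => exact h
    | succ n ih =>
      rw [Function.iterate_succ_apply']; exact avg_one_half_pos (hf.iterate_avg n) ih
  exact this.trans_le ((hf.iterate_avg n).anti _ _ (by simp))

/-- Iterated averages with widths `|c|`, `c ∈ l`, applied to `f`. -/
noncomputable def avgList (l : List ℝ) (f : ℝ → ℝ) : ℝ → ℝ :=
  l.foldr avg f

lemma avgList_cons (c : ℝ) (l : List ℝ) (f : ℝ → ℝ) :
    avgList (c :: l) f = avg c (avgList l f) := rfl

lemma SymmUnimodal.avgList {f : ℝ → ℝ} (hf : SymmUnimodal f) (l : List ℝ) :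
    SymmUnimodal (avgList l f) := by
  induction l with
  | nil => exact hf
  | cons c l ih => exact ih.avg c

lemma avg_avgList {f : ℝ → ℝ} (hf : SymmUnimodal f) (c : ℝ) (l : List ℝ) :
    avg c (avgList l f) = avgList l (avg c f) := by
  induction l with
  | nil => rfl
  | cons d l ih => rw [avgList_cons, avgList_cons, ← ih, avg_comm (hf.avgList l)]

/-- Among all choices of widths at most `1`, all widths equal to `1` gives the smallest
central value. -/
lemma iterate_avg_le_avgList (l : List ℝ) (hl : ∀ c ∈ l, |c| ≤ 1) {f : ℝ → ℝ}
    (hf : SymmUnimodal f) : (avg 1)^[l.length] f 0 ≤ avgList l f 0 := by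
  induction l generalizing f with
  | nil => exact le_rfl
  | cons c l ih =>
    have h1 := ih (fun d hd => hl d (by simp [hd])) (hf.avg 1)
    have h2 := avg_one_zero_le (hf.avgList l) (hl c (by simp))
    rw [avg_avgList hf] at h2
    exact h1.trans h2

/-! ### The box function -/

/-- The density of the uniform distribution on `[-1/2, 1/2]`, with the value `1/2` at both
endpoints, so that `box` is even and its integer translates sum to exactly `1`. -/
noncomputable def box (x : ℝ) : ℝ :=
  ((if -1/2 < x ∧ x ≤ 1/2 then 1 else 0) + (if -1/2 ≤ x ∧ x < 1/2 then 1 else 0)) / 2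

lemma symmUnimodal_box : SymmUnimodal box := by
  constructor
  · intro x; unfold box; split_ifs <;> norm_num
  · intro x y hxy
    unfold box
    rcases abs_cases x with ⟨h1, h2⟩ | ⟨h1, h2⟩ <;> rcases abs_cases y with ⟨h3, h4⟩ | ⟨h3, h4⟩ <;>
      rw [h1, h3] at hxy <;> split_ifs <;> first | (norm_num; done) | (exfalso; grind)

lemma box_half : 0 < box (1/2) := by norm_num [box]

/-- Refinement equation of the box. -/
lemma box_div_two (x : ℝ) : box (x / 2) = box (x - 1/2) + box (x + 1/2) := by
  unfold box
  split_ifs <;> first | (norm_num; done) | (exfalso; grind)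

/-- Translates of the box by distinct multiples of `1/M` overlap at most `M`-fold. -/
lemma sum_box_le {M : ℕ} (hM : 0 < M) (F : Finset ℤ) (x : ℝ) :
    ∑ k ∈ F, box (x + k / M) ≤ M := by
  have hM' : (0:ℝ) < M := by exact_mod_cast hM
  have h1 : ∑ k ∈ F, (if -1/2 < x + (k:ℝ) / M ∧ x + (k:ℝ) / M ≤ 1/2 then (1:ℝ) else 0) ≤ M := by
    rw [Finset.sum_boole]
    have hsub : (F.filter fun k : ℤ => -1/2 < x + (k:ℝ) / M ∧ x + (k:ℝ) / M ≤ 1/2) ⊆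
        Finset.Ioc (⌊(1/2 - x) * M⌋ - M) ⌊(1/2 - x) * M⌋ := by
      intro k hk
      simp only [Finset.mem_filter] at hk
      obtain ⟨-, h1, h2⟩ := hk
      have e : (k:ℝ) / M * M = k := by field_simp
      rw [Finset.mem_Ioc, Int.le_floor, sub_lt_iff_lt_add, Int.floor_lt]
      push_cast
      constructor <;> nlinarith
    have := Finset.card_le_card hsub
    rw [Int.card_Ioc] at this
    have h3 : (⌊(1/2 - x) * M⌋ - (⌊(1/2 - x) * M⌋ - (M:ℤ))).toNat = M := by simp
    rw [h3] at this
    exact_mod_cast this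
  have h2 : ∑ k ∈ F, (if -1/2 ≤ x + (k:ℝ) / M ∧ x + (k:ℝ) / M < 1/2 then (1:ℝ) else 0) ≤ M := by
    rw [Finset.sum_boole]
    have hsub : (F.filter fun k : ℤ => -1/2 ≤ x + (k:ℝ) / M ∧ x + (k:ℝ) / M < 1/2) ⊆
        Finset.Ico (⌈(-1/2 - x) * M⌉) (⌈(-1/2 - x) * M⌉ + M) := by
      intro k hk
      simp only [Finset.mem_filter] at hk
      obtain ⟨-, h1, h2⟩ := hk
      have e : (k:ℝ) / M * M = k := by field_simp
      rw [Finset.mem_Ico, Int.ceil_le, ← sub_lt_iff_lt_add, Int.lt_ceil]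
      push_cast
      constructor <;> nlinarith
    have := Finset.card_le_card hsub
    rw [Int.card_Ico] at this
    have h3 : (⌈(-1/2 - x) * M⌉ + (M:ℤ) - ⌈(-1/2 - x) * M⌉).toNat = M := by simp
    rw [h3] at this
    exact_mod_cast this
  simp only [box]
  rw [← Finset.sum_div, Finset.sum_add_distrib]
  linarith

/-- The overlap bound for translates of the box survives averaging. -/
lemma sum_avgList_box_le {M : ℕ} (hM : 0 < M) (F : Finset ℤ) (l : List ℝ) (x : ℝ) :
    ∑ k ∈ F, avgList l box (x + k / M) ≤ M := by
  induction l generalizing x with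
  | nil => exact sum_box_le hM F x
  | cons c l ih =>
    have hs := symmUnimodal_box.avgList l
    simp only [avgList_cons, avg]
    rw [← intervalIntegral.integral_finsetSum
      fun k _ => hs.intervalIntegrable (by fun_prop) _ _]
    have : ∫ u in (-1/2 : ℝ)..(1/2), ∑ k ∈ F, avgList l box (x + k / M + c * u) ≤
        ∫ u in (-1/2 : ℝ)..(1/2), (M : ℝ) := by
      refine intervalIntegral.integral_mono_on (by norm_num) ?_ (by simp) ?_
      · have := IntervalIntegrable.sum (μ := volume) (a := -1/2) (b := 1/2) F
          (f := fun k u => avgList l box (x + k / M + c * u))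
          fun k _ => hs.intervalIntegrable (by fun_prop) _ _
        rwa [Finset.sum_fn] at this
      · intro u _
        simpa only [add_right_comm] using ih (x + c * u)
    refine this.trans (by norm_num)

/-! ### The refinement equation -/

/-- A uniform variable of width `2 * c` is one of width `c` plus an independent sign times `c/2`. -/
lemma avg_two_mul {f : ℝ → ℝ} (hf : SymmUnimodal f) (c x : ℝ) :
    avg (2 * c) f x = (avg c f (x - c / 2) + avg c f (x + c / 2)) / 2 := by
  have hi : ∀ a b, IntervalIntegrable (fun u => f (x + c * u)) volume a b := fun a b =>
    hf.intervalIntegrable (by fun_prop) a b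
  have h0 : avg (2 * c) f x = (∫ u in (-1 : ℝ)..1, f (x + c * u)) / 2 := by
    have := intervalIntegral.integral_comp_mul_left (a := -1/2) (b := 1/2)
      (fun u => f (x + c * u)) (two_ne_zero (α := ℝ))
    norm_num at this
    rw [div_eq_inv_mul, show (2:ℝ)⁻¹ = 1/2 by norm_num, ← this, avg]
    congr 1
    · funext u; congr 1; ring
    · norm_num
  have h1 : avg c f (x - c / 2) = ∫ u in (-1 : ℝ)..0, f (x + c * u) := by
    have := intervalIntegral.integral_comp_sub_right (a := -1/2) (b := 1/2)
      (fun u => f (x + c * u)) (1/2)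
    norm_num at this
    rw [← this, avg]
    congr 1
    · funext u; congr 1; ring
    · norm_num
  have h2 : avg c f (x + c / 2) = ∫ u in (0 : ℝ)..1, f (x + c * u) := by
    have := intervalIntegral.integral_comp_add_right (a := -1/2) (b := 1/2)
      (fun u => f (x + c * u)) (1/2)
    norm_num at this
    rw [← this, avg]
    congr 1
    · funext u; congr 1; ring
    · norm_num
  rw [h0, h1, h2, intervalIntegral.integral_add_adjacent_intervals (hi _ _) (hi _ _)]

/-- Refinement equation: the density of `∑ aᵢ Uᵢ / M`, stretched by two, is an average of its
translates by the centred subset sums. The element `m = ± M` accounts for the box itself. -/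
lemma avgList_refine {M : ℕ} {m : ℤ} (hm : (m : ℝ) / M = 1 ∨ (m : ℝ) / M = -1) (l : List ℤ)
    (hl : (m :: l).Nodup) (x : ℝ) :
    2 ^ l.length * avgList (l.map fun a : ℤ => (a : ℝ) / M) box (x / 2) =
      ∑ T ∈ (insert m l.toFinset).powerset,
        avgList (l.map fun a : ℤ => (a : ℝ) / M) box
          (x - ((∑ i ∈ insert m l.toFinset, i : ℤ) : ℝ) / M / 2 + ((∑ i ∈ T, i : ℤ) : ℝ) / M) := by
  induction l generalizing x with
  | nil =>
    have : (insert m (List.nil : List ℤ).toFinset).powerset = {∅, {m}} := by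
      ext T; simp [Finset.subset_singleton_iff]
    rw [this, Finset.sum_pair (by simp)]
    simp only [avgList, List.map_nil, List.foldr_nil, List.toFinset_nil, insert_empty_eq,
      Finset.sum_singleton, Finset.sum_empty, List.length_nil, pow_zero, one_mul]
    rw [box_div_two]
    rcases hm with h | h <;> rw [h]
    · norm_num; congr 1; ring
    · norm_num; rw [add_comm]; congr 1; congr 1; ring
  | cons a l ih =>
    have hl' : (m :: l).Nodup := by
      simp only [List.nodup_cons, List.mem_cons, not_or] at hl ⊢; tauto
    have ha : a ∉ insert m l.toFinset := by
      simp only [List.nodup_cons, List.mem_cons, not_or] at hl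
      simp only [Finset.mem_insert, List.mem_toFinset, not_or]; grind
    have hs := symmUnimodal_box.avgList (l.map fun a : ℤ => (a : ℝ) / M)
    specialize ih hl'
    have he : insert m (a :: l).toFinset = insert a (insert m l.toFinset) := by
      rw [List.toFinset_cons, Finset.insert_comm]
    rw [he, Finset.sum_powerset_insert ha]
    set S := insert m l.toFinset with hS
    set c : ℝ := (a : ℝ) / M with hc
    set h := avgList (l.map fun a : ℤ => (a : ℝ) / M) box with hh
    rw [List.map_cons, avgList_cons, ← hh, List.length_cons]
    set s : ℝ := ((∑ i ∈ S, i : ℤ) : ℝ) / M with hsdef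
    have hsum : ((∑ i ∈ insert a S, i : ℤ) : ℝ) / M = c + s := by
      rw [Finset.sum_insert ha]; push_cast; rw [add_div, hsdef]; push_cast; rfl
    rw [hsum]
    have hT : ∀ T ∈ S.powerset, ((∑ i ∈ insert a T, i : ℤ) : ℝ) / M =
        c + ((∑ i ∈ T, i : ℤ) : ℝ) / M := by
      intro T hT
      rw [Finset.sum_insert fun h => ha (Finset.mem_powerset.1 hT h)]; push_cast
      rw [add_div]
    have key : 2 ^ l.length * avg c h (x / 2) =
        ∑ T ∈ S.powerset, avg (2 * c) h (x - s / 2 + ((∑ i ∈ T, i : ℤ) : ℝ) / M) := by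
      simp only [avg]
      rw [← intervalIntegral.integral_finsetSum
        fun k _ => hs.intervalIntegrable (by fun_prop) _ _, ← intervalIntegral.integral_const_mul]
      congr 1; funext u
      have := ih (x + 2 * c * u)
      rw [show (x + 2 * c * u) / 2 = x / 2 + c * u by ring] at this
      rw [this]
      refine Finset.sum_congr rfl fun T _ => ?_
      congr 1; ring
    rw [pow_succ, mul_right_comm, key, Finset.sum_mul, ← Finset.sum_add_distrib]
    refine Finset.sum_congr rfl fun T hTm => ?_
    rw [avg_two_mul hs, hT T hTm, div_mul_cancel₀ _ two_ne_zero]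
    congr 2 <;> ring

/-- If the subset sums of `X` are distinct, their translates barely overlap, which bounds the
central value of the density. -/
lemma avgList_box_zero_le {M : ℕ} (hM : 0 < M) {m : ℤ}
    (hm : (m : ℝ) / M = 1 ∨ (m : ℝ) / M = -1) (l : List ℤ) (hl : (m :: l).Nodup)
    (hinj : Set.InjOn (fun T : Finset ℤ => ∑ i ∈ T, i) (insert m l.toFinset).powerset) :
    2 ^ l.length * avgList (l.map fun a : ℤ => (a : ℝ) / M) box 0 ≤ M := by
  have h := avgList_refine hm l hl 0
  rw [zero_div] at h
  rw [h]
  set y : ℝ := 0 - ((∑ i ∈ insert m l.toFinset, i : ℤ) : ℝ) / M / 2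
  have := Finset.sum_image (f := fun k : ℤ =>
    avgList (l.map fun a : ℤ => (a : ℝ) / M) box (y + (k : ℝ) / M)) hinj
  rw [← this]
  exact sum_avgList_box_le hM _ _ _

/-! ### Sinc integrals and Fourier inversion -/

lemma sq_sinc_le (x : ℝ) : Real.sinc x ^ 2 ≤ 2 * (1 + x ^ 2)⁻¹ := by
  rw [← div_eq_mul_inv, le_div_iff₀ (by positivity)]
  have h1 : Real.sinc x ^ 2 ≤ 1 := by
    rw [← sq_abs]; exact pow_le_one₀ (abs_nonneg _) (Real.abs_sinc_le_one x)
  have h2 : Real.sinc x ^ 2 * x ^ 2 ≤ 1 := by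
    rcases eq_or_ne x 0 with rfl | hx
    · simp
    · rw [← mul_pow, Real.sinc_of_ne_zero hx, div_mul_cancel₀ _ hx]; exact Real.sin_sq_le_one x
  linarith

lemma integrable_sinc_pow {n : ℕ} (hn : 2 ≤ n) : Integrable fun x => Real.sinc x ^ n := by
  refine (integrable_inv_one_add_sq.const_mul 2).mono'
    (Real.continuous_sinc.pow n).aestronglyMeasurable (Filter.Eventually.of_forall fun x => ?_)
  rw [Real.norm_eq_abs, abs_pow]
  refine (pow_le_pow_of_le_one (abs_nonneg _) (Real.abs_sinc_le_one x) hn).trans ?_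
  rw [sq_abs]; exact sq_sinc_le x

lemma integral_cos_eq_sinc (s x : ℝ) :
    ∫ u in (-1/2 : ℝ)..(1/2), Real.cos (2 * s * (x + 1 * u)) =
      Real.cos (2 * s * x) * Real.sinc s := by
  rcases eq_or_ne s 0 with rfl | hs
  · norm_num
  · have h := intervalIntegral.integral_comp_add_mul (a := -1/2) (b := 1/2) Real.cos
      (mul_ne_zero two_ne_zero hs) (2 * s * x)
    have e : ∀ u : ℝ, 2 * s * (x + 1 * u) = 2 * s * x + 2 * s * u := fun u => by ring
    simp only [e]
    rw [h, integral_cos, Real.sinc_of_ne_zero hs, smul_eq_mul,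
      show 2 * s * x + 2 * s * (1/2) = 2 * s * x + s by ring,
      show 2 * s * x + 2 * s * (-1/2) = 2 * s * x - s by ring, Real.sin_add, Real.sin_sub]
    field_simp
    ring

lemma box_ae : box =ᵐ[volume] (Set.Ioc (-1/2 : ℝ) (1/2)).indicator 1 := by
  have h1 : ∀ᵐ x : ℝ, x ≠ -1/2 := Measure.ae_ne volume _
  have h2 : ∀ᵐ x : ℝ, x ≠ 1/2 := Measure.ae_ne volume _
  filter_upwards [h1, h2] with x h1 h2
  simp only [Set.indicator, Set.mem_Ioc, Pi.one_apply, box]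
  split_ifs <;> first | (norm_num; done) | (exfalso; grind)

lemma boxC_ae : (fun x => (box x : ℂ)) =ᵐ[volume] (Set.Ioc (-1/2 : ℝ) (1/2)).indicator 1 := by
  filter_upwards [box_ae] with x hx
  rw [hx]; simp only [Set.indicator]; split_ifs <;> simp

lemma integrable_boxC : Integrable fun x => (box x : ℂ) := by
  rw [integrable_congr boxC_ae, integrable_indicator_iff measurableSet_Ioc]
  exact integrableOn_const (by simp)

lemma integral_boxC_mul (g : ℝ → ℂ) :
    ∫ x, (box x : ℂ) * g x = ∫ x in (-1/2 : ℝ)..(1/2), g x := by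
  rw [intervalIntegral.integral_of_le (by norm_num), ← integral_indicator measurableSet_Ioc]
  refine integral_congr_ae ?_
  filter_upwards [boxC_ae] with x hx
  rw [hx]; simp only [Set.indicator]; split_ifs <;> simp

open FourierTransform in
lemma fourier_box (ξ : ℝ) : 𝓕 (fun x => (box x : ℂ)) ξ = (Real.sinc (Real.pi * ξ) : ℂ) := by
  rw [Real.fourier_real_eq_integral_exp_smul]
  simp only [smul_eq_mul]
  simp_rw [mul_comm (Complex.exp _)]
  rw [integral_boxC_mul]
  rcases eq_or_ne ξ 0 with rfl | hξ
  · norm_num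
  · have hp : (Real.pi : ℂ) ≠ 0 := by exact_mod_cast Real.pi_ne_zero
    have hx : (ξ : ℂ) ≠ 0 := by exact_mod_cast hξ
    have hc : (-2 * Real.pi * ξ * Complex.I : ℂ) ≠ 0 := by simp [hp, hx]
    have h := integral_exp_mul_complex (a := -1/2) (b := 1/2) hc
    have e : ∀ x : ℝ, ((-2 * Real.pi * x * ξ : ℝ) : ℂ) * Complex.I =
        (-2 * Real.pi * ξ * Complex.I : ℂ) * x := fun x => by push_cast; ring
    simp only [e]
    rw [h, Real.sinc_of_ne_zero (mul_ne_zero Real.pi_ne_zero hξ)]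
    push_cast
    rw [Complex.sin]
    rw [show (-2 * Real.pi * ξ * Complex.I : ℂ) * (1/2) = -(Real.pi * ξ) * Complex.I by ring,
      show (-2 * Real.pi * ξ * Complex.I : ℂ) * (-1/2) = (Real.pi * ξ) * Complex.I by ring]
    field_simp
    ring_nf
    simp only [Complex.I_sq]
    ring

lemma convolution_box (x : ℝ) :
    convolution (fun x => (box x : ℂ)) (fun x => (box x : ℂ)) (ContinuousLinearMap.mul ℂ ℂ) volume x
      = (avg 1 box x : ℂ) := by
  rw [convolution_def]
  simp only [ContinuousLinearMap.mul_apply']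
  rw [integral_boxC_mul, intervalIntegral.integral_ofReal, ← avg_neg_left, avg]
  congr 3; funext u; congr 1; ring

lemma continuous_avg_box : Continuous (avg 1 box) := by
  have hi : ∀ a b, IntervalIntegrable box volume a b := fun a b =>
    symmUnimodal_box.intervalIntegrable measurable_id a b
  have h := intervalIntegral.continuous_primitive hi 0
  have : avg 1 box = fun x => (∫ u in (0:ℝ)..(x + 1/2), box u) - ∫ u in (0:ℝ)..(x - 1/2), box u := by
    funext x
    rw [intervalIntegral.integral_interval_sub_left (hi _ _) (hi _ _), avg_eq_div one_ne_zero]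
    simp
  rw [this]
  exact (h.comp (by fun_prop)).sub (h.comp (by fun_prop))

open FourierTransform in
/-- Fourier inversion for the tent function `avg 1 box`, the density of the sum of two independent
uniform variables. -/
lemma avg_box_eq_integral (x : ℝ) :
    avg 1 box x = 1 / Real.pi * ∫ s, Real.cos (2 * s * x) * Real.sinc s ^ 2 := by
  set F : ℝ → ℂ := fun x => (avg 1 box x : ℂ) with hF
  have hFc : F = convolution (fun x => (box x : ℂ)) (fun x => (box x : ℂ))
      (ContinuousLinearMap.mul ℂ ℂ) volume := by
    funext x; exact (convolution_box x).symm
  have hcont : Continuous F := Complex.continuous_ofReal.comp continuous_avg_box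
  have hF_int : Integrable F := by
    rw [hFc]; exact integrable_boxC.integrable_convolution _ integrable_boxC
  have hfour : 𝓕 F = fun ξ => ((Real.sinc (Real.pi * ξ) ^ 2 : ℝ) : ℂ) := by
    funext ξ
    rw [hFc, Real.fourier_mul_convolution_eq integrable_boxC integrable_boxC, fourier_box]
    push_cast; ring
  have hfi : Integrable fun ξ => Real.sinc (Real.pi * ξ) ^ 2 :=
    (integrable_sinc_pow le_rfl).comp_mul_left' Real.pi_ne_zero
  have hinv := congrFun (hcont.fourierInv_fourier_eq hF_int (by rw [hfour]; exact hfi.ofReal)) x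
  rw [hfour, Real.fourierInv_eq'] at hinv
  have hre := congrArg Complex.re hinv
  simp only [hF, Complex.ofReal_re, smul_eq_mul] at hre
  rw [← hre]
  have hI : Integrable fun v : ℝ => Complex.exp (((2 * Real.pi * inner ℝ v x : ℝ) : ℂ) * Complex.I) *
      ((Real.sinc (Real.pi * v) ^ 2 : ℝ) : ℂ) := by
    refine hfi.ofReal.bdd_mul (c := 1) ?_ ?_
    · refine Continuous.aestronglyMeasurable ?_
      fun_prop
    · exact Filter.Eventually.of_forall fun v => (Complex.norm_exp_ofReal_mul_I _).le
  have hre2 := integral_re hI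
  simp only [RCLike.re_eq_complex_re] at hre2
  rw [← hre2]
  have hcv := Measure.integral_comp_mul_left
    (fun s => Real.cos (2 * s * x) * Real.sinc s ^ 2) Real.pi
  rw [abs_of_pos (by positivity), smul_eq_mul, ← one_div] at hcv
  rw [← hcv]
  congr 1; funext v
  rw [Complex.re_mul_ofReal, Complex.exp_ofReal_mul_I_re]
  congr 2
  simp; ring

lemma integrable_cos_mul_sinc_pow {n : ℕ} (hn : 2 ≤ n) (x : ℝ) :
    Integrable fun s => Real.cos (2 * s * x) * Real.sinc s ^ n := by
  refine (integrable_sinc_pow hn).bdd_mul (c := 1) ?_ ?_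
  · refine Continuous.aestronglyMeasurable ?_
    fun_prop
  · exact Filter.Eventually.of_forall fun v => Real.abs_cos_le_one _

/-- Averaging the kernel `cos (2 s x)` in `x` produces one more factor `sinc s`. -/
lemma iterate_avg_box_eq_integral (n : ℕ) (x : ℝ) :
    (avg 1)^[n + 1] box x = 1 / Real.pi * ∫ s, Real.cos (2 * s * x) * Real.sinc s ^ (n + 2) := by
  induction n generalizing x with
  | zero => exact avg_box_eq_integral x
  | succ n ih =>
    rw [Function.iterate_succ_apply', avg]
    simp only [ih]
    rw [intervalIntegral.integral_const_mul, intervalIntegral_integral_swap]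
    · congr 2; funext s
      rw [intervalIntegral.integral_mul_const, integral_cos_eq_sinc]; ring
    · have : IsFiniteMeasure (volume.restrict (Set.uIoc (-1/2 : ℝ) (1/2))) :=
        ⟨by simp [Set.uIoc]⟩
      have h1 : Integrable (fun p : ℝ × ℝ => (1:ℝ) * Real.sinc p.2 ^ (n + 2))
          ((volume.restrict (Set.uIoc (-1/2 : ℝ) (1/2))).prod volume) :=
        Integrable.mul_prod (integrable_const (1:ℝ))
          (integrable_sinc_pow (by omega))
      simp only [one_mul] at h1
      refine h1.bdd_mul (c := 1) (f := fun p : ℝ × ℝ => Real.cos (2 * p.2 * (x + 1 * p.1))) ?_ ?_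
      · refine Continuous.aestronglyMeasurable ?_
        fun_prop
      · exact Filter.Eventually.of_forall fun v => Real.abs_cos_le_one _

lemma sincIntegral_eq_integral_sinc (n : ℕ) :
    sincIntegral n = 1 / Real.pi * ∫ s, Real.sinc s ^ n := by
  have h := integral_comp_abs (f := fun s => Real.sinc s ^ n)
  have h1 : ∀ s : ℝ, Real.sinc |s| = Real.sinc s := by
    intro s
    rcases abs_choice s with h | h <;> rw [h]
    exact Real.sinc_neg s
  simp only [h1] at h
  have h2 : ∫ x in Set.Ioi (0 : ℝ), (Real.sin x / x) ^ n =
      ∫ x in Set.Ioi (0 : ℝ), Real.sinc x ^ n := by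
    refine setIntegral_congr_fun measurableSet_Ioi fun x hx => ?_
    simp only [Real.sinc_of_ne_zero (ne_of_gt hx)]
  rw [sincIntegral, h, h2]; ring

/-- `σₙ` is the central density of the sum of `n` independent uniform variables on
`[-1/2, 1/2]`. -/
lemma sincIntegral_eq (n : ℕ) : sincIntegral (n + 2) = (avg 1)^[n + 1] box 0 := by
  rw [iterate_avg_box_eq_integral, sincIntegral_eq_integral_sinc]
  simp only [mul_zero, Real.cos_zero, one_mul]

open FourierTransform in
/-- The Lebesgue integral defining `σ₁` either is the junk value `0` of a non-integrable function
or is given by Fourier inversion at the continuity point `0` of the box. In both cases its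
logarithm vanishes. -/
lemma sincIntegral_one : sincIntegral 1 = 0 ∨ sincIntegral 1 = 1 := by
  rw [sincIntegral_eq_integral_sinc]
  simp only [pow_one]
  by_cases hi : Integrable Real.sinc
  swap
  · left; rw [integral_undef hi, mul_zero]
  right
  have hfour : 𝓕 (fun x => (box x : ℂ)) = fun ξ => (Real.sinc (Real.pi * ξ) : ℂ) :=
    funext fourier_box
  have hfi : Integrable fun ξ => Real.sinc (Real.pi * ξ) := hi.comp_mul_left' Real.pi_ne_zero
  have hcont : ContinuousAt (fun x => (box x : ℂ)) 0 := by
    refine (continuousAt_const (y := (1 : ℂ))).congr ?_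
    filter_upwards [Ioo_mem_nhds (show (-1/2 : ℝ) < 0 by norm_num) (show (0 : ℝ) < 1/2 by norm_num)]
      with x hx
    rw [box, if_pos ⟨hx.1, hx.2.le⟩, if_pos ⟨hx.1.le, hx.2⟩]
    norm_num
  have hinv := integrable_boxC.fourierInv_fourier_eq (by rw [hfour]; exact hfi.ofReal) hcont
  rw [hfour, Real.fourierInv_eq'] at hinv
  simp only [inner_zero_right, mul_zero, Complex.ofReal_zero, zero_mul, Complex.exp_zero,
    one_smul] at hinv
  rw [integral_complex_ofReal] at hinv
  have h0 : box 0 = 1 := by norm_num [box]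
  rw [h0] at hinv
  have hcv := Measure.integral_comp_mul_left Real.sinc Real.pi
  rw [abs_of_pos (by positivity), smul_eq_mul, ← one_div] at hcv
  rw [← hcv]
  exact_mod_cast hinv

/-! ### Coinciding subset sums -/

/-- A coincidence between two subset sums lets one coefficient of a nonnegative combination be
reduced to zero. -/
lemma exists_proper_subset_of_sum_eq {X S T : Finset ℤ} {b : ℤ} (hb : b ∈ SgZ X) (hS : S ⊆ X)
    (hT : T ⊆ X) (hne : ¬ S ⊆ T) (hsum : ∑ i ∈ S, i = ∑ i ∈ T, i) :
    ∃ Y : Finset ℤ, Y ⊂ X ∧ b ∈ SgZ Y := by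
  obtain ⟨lam, hlam⟩ := hb
  have hP : (S \ T).Nonempty := Finset.sdiff_nonempty.2 hne
  obtain ⟨j, hj, hmin⟩ := Finset.exists_min_image (S \ T) lam hP
  have hjS : j ∈ S := (Finset.mem_sdiff.1 hj).1
  have hjT : j ∉ T := (Finset.mem_sdiff.1 hj).2
  -- Move `lam j` units of weight from `S` to `T`; on `S ∩ T` nothing changes.
  let mu : ℤ → ℤ := fun i => lam i - lam j * ((if i ∈ S then 1 else 0) - if i ∈ T then 1 else 0)
  have hmu : ∀ i, 0 ≤ mu i := by
    intro i
    by_cases h1 : i ∈ S <;> by_cases h2 : i ∈ T <;> simp only [mu, h1, h2, if_true, if_false]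
    · simp
    · have := hmin i (Finset.mem_sdiff.2 ⟨h1, h2⟩)
      push_cast; linarith [(Int.ofNat_le.2 this)]
    · have : (0:ℤ) ≤ lam i := by positivity
      have : (0:ℤ) ≤ lam j := by positivity
      linarith
    · simp
  have hmuj : mu j = 0 := by simp [mu, hjS, hjT]
  refine ⟨X.erase j, Finset.erase_ssubset (hS hjS), fun i => (mu i).toNat, ?_⟩
  simp only [Int.toNat_of_nonneg (hmu _)]
  rw [Finset.sum_erase _ (by rw [hmuj, zero_mul])]
  have e : ∀ i, mu i * i = lam i * i - lam j * ((if i ∈ S then i else 0) - if i ∈ T then i else 0) := by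
    intro i
    simp only [mu]
    split_ifs <;> ring
  simp only [e]
  rw [Finset.sum_sub_distrib, ← Finset.mul_sum, Finset.sum_sub_distrib, Finset.sum_ite_mem,
    Finset.sum_ite_mem, Finset.inter_eq_right.2 hS, Finset.inter_eq_right.2 hT, hsum, hlam]
  ring

/-- For a set of at least two integers with distinct subset sums, `2 ^ (n - 1) σₙ ≤ ‖X‖_∞`. -/
lemma two_pow_mul_sincIntegral_le {X : Finset ℤ} (hX : 2 ≤ X.card) (hnz : ∀ n ∈ X, n ≠ 0)
    (hinj : Set.InjOn (fun T : Finset ℤ => ∑ i ∈ T, i) X.powerset) :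
    2 ^ (X.card - 1) * sincIntegral X.card ≤ ((X.sup fun n => n.natAbs : ℕ) : ℝ) := by
  obtain ⟨m, hmX, hm⟩ := Finset.exists_mem_eq_sup X (Finset.card_pos.1 (by omega))
    fun n : ℤ => n.natAbs
  set M := X.sup fun n : ℤ => n.natAbs with hM
  have hMpos : 0 < M := by rw [hm]; exact Int.natAbs_pos.2 (hnz m hmX)
  have hMR : (0 : ℝ) < M := by exact_mod_cast hMpos
  have hm1 : (m : ℝ) / M = 1 ∨ (m : ℝ) / M = -1 := by
    rcases Int.natAbs_eq m with h | h <;> rw [← hm] at h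
    · left; rw [h]; push_cast; exact div_self hMR.ne'
    · right; rw [h]; push_cast; rw [neg_div, div_self hMR.ne']
  set l := (X.erase m).toList with hl
  have hins : insert m l.toFinset = X := by
    rw [hl, Finset.toList_toFinset, Finset.insert_erase hmX]
  have hnd : (m :: l).Nodup := by
    rw [List.nodup_cons]
    exact ⟨by simp [hl], Finset.nodup_toList _⟩
  have hlen : l.length = X.card - 1 := by rw [hl, Finset.length_toList, Finset.card_erase_of_mem hmX]
  rw [← hins] at hinj
  have h1 := avgList_box_zero_le hMpos hm1 l hnd hinj
  have h2 := iterate_avg_le_avgList (l.map fun a : ℤ => (a : ℝ) / M) (fun c hc => by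
    obtain ⟨a, ha, rfl⟩ := List.mem_map.1 hc
    have haX : a ∈ X := Finset.mem_of_mem_erase (Finset.mem_toList.1 ha)
    have : a.natAbs ≤ M := Finset.le_sup (f := fun n : ℤ => n.natAbs) haX
    rw [abs_div, abs_of_pos hMR, div_le_one hMR, ← Int.cast_abs, ← Nat.cast_natAbs]
    exact_mod_cast this) symmUnimodal_box
  obtain ⟨k, hk⟩ : ∃ k, X.card = k + 2 := ⟨X.card - 2, by omega⟩
  have hk1 : X.card - 1 = k + 1 := by omega
  rw [List.length_map, hlen, hk1] at h2
  rw [hlen] at h1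
  refine le_trans ?_ h1
  rw [hk, sincIntegral_eq]
  exact mul_le_mul_of_nonneg_left h2 (by positivity)

/-- **Lemma 4.** Let `X` be a finite set of nonzero integers and `b ∈ Sg(X)`.
If `|X| > 1 - log₂ σ_{|X|} + log₂ ‖X‖_∞` then there is a proper subset
`Y ⊊ X` with `b ∈ Sg(Y)`. -/
theorem knapsack_exists_proper_subset_sinc (X : Finset ℤ)
    (hnz : ∀ n ∈ X, n ≠ 0) (b : ℤ) (hb : b ∈ SgZ X)
    (hcard : (X.card : ℝ) > 1 - Real.logb 2 (sincIntegral X.card) +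
      Real.logb 2 ((X.sup fun n => n.natAbs : ℕ) : ℝ)) :
    ∃ Y : Finset ℤ, Y ⊂ X ∧ b ∈ SgZ Y := by
  rcases X.eq_empty_or_nonempty with rfl | hne
  · -- The integral defining `σ₀` diverges, so both logarithms have the junk value `0`.
    simp [sincIntegral, Measure.real] at hcard
    linarith
  have hsup : 1 ≤ X.sup fun n : ℤ => n.natAbs := by
    obtain ⟨m, hm⟩ := hne
    exact (Int.natAbs_pos.2 (hnz m hm)).trans_le (Finset.le_sup (f := fun n : ℤ => n.natAbs) hm)
  rcases (Nat.succ_le_of_lt hne.card_pos).eq_or_lt with h1 | h2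
  · have hlog : 0 ≤ Real.logb 2 ((X.sup fun n => n.natAbs : ℕ) : ℝ) :=
      Real.logb_nonneg one_lt_two (by exact_mod_cast hsup)
    have h1' : X.card = 1 := by omega
    rw [h1'] at hcard
    have hσ : Real.logb 2 (sincIntegral 1) = 0 := by
      rcases sincIntegral_one with h | h <;> simp [h]
    rw [hσ] at hcard
    push_cast at hcard
    linarith
  have hX : 2 ≤ X.card := by omega
  have hninj : ¬ Set.InjOn (fun T : Finset ℤ => ∑ i ∈ T, i) X.powerset := by
    intro hinj
    have hle := two_pow_mul_sincIntegral_le hX hnz hinj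
    have hσ : 0 < sincIntegral X.card := by
      obtain ⟨k, hk⟩ : ∃ k, X.card = k + 2 := ⟨X.card - 2, by omega⟩
      rw [hk, sincIntegral_eq]
      exact iterate_avg_zero_pos symmUnimodal_box box_half _
    have hlog := Real.logb_le_logb_of_le one_lt_two (by positivity) hle
    rw [Real.logb_mul (by positivity) hσ.ne', Real.logb_pow, Real.logb_self_eq_one one_lt_two,
      mul_one, Nat.cast_sub (by omega), Nat.cast_one] at hlog
    linarith
  simp only [Set.InjOn, Finset.mem_coe, Finset.mem_powerset, not_forall] at hninj
  obtain ⟨S, hS, T, hT, hsum, hST⟩ := hninj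
  by_cases h : S ⊆ T
  · exact exists_proper_subset_of_sum_eq hb hT hS (fun h' => hST (h.antisymm h')) hsum.symm
  · exact exists_proper_subset_of_sum_eq hb hS hT h hsum
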